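/- Let γ_B2, ε_B2 ∈ [0,1] and g ∈ ℝ. Suppose the model-closeness condition holds with gap g and error ε_B2, i.e., for each (a,b) ∈ {(1,1),(1,0),(0,1)}: |P(Y | Vᵃ ∩ V̂ᵇ ∩ L₁) − P(Y | Vᵃ ∩ V̂ᵇ ∩ L₀) − g| ≤ ε_B2, and suppose |r₀ − r₁| ≤ γ_B2 and |p₀ − p₁| ≤ γ_B2. Then |G − Ĝ| ≤ 2 · γ_B2 + 3 · ε_B2. -/

import Mathlib

open MeasureTheory

/-- Conditional probability `P(A | B) = μ(A ∩ B) / μ(B)` as a real number. -/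
noncomputable def condP {Ω : Type*} [MeasurableSpace Ω] (μ : Measure Ω) (A B : Set Ω) : ℝ :=
  (μ (A ∩ B)).toReal / (μ B).toReal

/-- `ev S true = S` (the event `s = 1`) and `ev S false = Sᶜ` (the event `s = 0`). -/
def ev {Ω : Type*} (S : Set Ω) (b : Bool) : Set Ω := bif b then S else Sᶜ

lemma condP_nonneg' {Ω : Type*} [MeasurableSpace Ω] (μ : Measure Ω) (A B : Set Ω) :
    0 ≤ condP μ A B := by unfold condP; positivity

lemma condP_le_one' {Ω : Type*} [MeasurableSpace Ω] (μ : Measure Ω) [IsProbabilityMeasure μ]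
    (A B : Set Ω) : condP μ A B ≤ 1 := by
  unfold condP
  apply div_le_one_of_le₀ _ ENNReal.toReal_nonneg
  exact ENNReal.toReal_mono (measure_ne_top _ _) (measure_mono Set.inter_subset_right)

lemma condP_split {Ω : Type*} [MeasurableSpace Ω] (μ : Measure Ω) [IsProbabilityMeasure μ]
    (Y S T K : Set Ω) (hT : MeasurableSet T)
    (h1 : 0 < μ (S ∩ T ∩ K)) (h2 : 0 < μ (S ∩ Tᶜ ∩ K)) :
    condP μ Y (S ∩ K) = (1 - condP μ Tᶜ (S ∩ K)) * condP μ Y (S ∩ T ∩ K)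
      + condP μ Tᶜ (S ∩ K) * condP μ Y (S ∩ Tᶜ ∩ K) := by
  have key : ∀ A : Set Ω, (μ A).toReal = (μ (A ∩ T)).toReal + (μ (A \ T)).toReal := by
    intro A
    rw [← ENNReal.toReal_add (measure_ne_top _ _) (measure_ne_top _ _),
      measure_inter_add_diff A hT]
  have e1 := key (S ∩ K)
  have e2 := key (Y ∩ (S ∩ K))
  have s1 : S ∩ K ∩ T = S ∩ T ∩ K := by ext; simp; tauto
  have s2 : (S ∩ K) \ T = S ∩ Tᶜ ∩ K := by ext; simp; tauto
  have s3 : Y ∩ (S ∩ K) ∩ T = Y ∩ (S ∩ T ∩ K) := by ext; simp; tauto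
  have s4 : (Y ∩ (S ∩ K)) \ T = Y ∩ (S ∩ Tᶜ ∩ K) := by ext; simp; tauto
  have s5 : Tᶜ ∩ (S ∩ K) = S ∩ Tᶜ ∩ K := by ext; simp; tauto
  rw [s1, s2] at e1
  rw [s3, s4] at e2
  have p1 := ENNReal.toReal_pos h1.ne' (measure_ne_top _ _)
  have p2 := ENNReal.toReal_pos h2.ne' (measure_ne_top _ _)
  unfold condP
  rw [s5, e1, e2]
  field_simp
  ring

lemma gap_bound (r0 r1 a0 a1 b0 b1 g e c : ℝ) (hr : 0 ≤ r1) (hr' : r1 ≤ 1)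
    (ha : 0 ≤ a0) (ha' : a0 ≤ 1) (hb : 0 ≤ b0) (hb' : b0 ≤ 1)
    (h1 : |a1 - a0 - g| ≤ e) (h2 : |b1 - b0 - g| ≤ e) (h3 : |r0 - r1| ≤ c) :
    |((1 - r1) * a1 + r1 * b1) - ((1 - r0) * a0 + r0 * b0) - g| ≤ e + c := by
  have hab : |a0 - b0| ≤ 1 := abs_le.2 ⟨by linarith, by linarith⟩
  have h4 : |(r0 - r1) * (a0 - b0)| ≤ c := by
    rw [abs_mul]
    nlinarith [abs_nonneg (r0 - r1), abs_nonneg (a0 - b0)]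
  rw [abs_le] at *
  constructor <;> nlinarith

/-- Case B2: if model closeness holds with gap `g` and error `ε_B2` on the cells
`(a,b) ∈ {(1,1),(1,0),(0,1)}` of the confusion matrix, and the precision errors (resp. recall
errors) are `γ_B2`-close across slices, then `|G - Ĝ| ≤ 2 γ_B2 + 3 ε_B2`. -/
theorem stmt_11 {Ω : Type*} [MeasurableSpace Ω] (μ : Measure Ω) [IsProbabilityMeasure μ]
    (Y V Vh : Set Ω) (L : Bool → Set Ω) (γB2 εB2 g : ℝ)
    (hY : MeasurableSet Y) (hV : MeasurableSet V) (hVh : MeasurableSet Vh)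
    (hL : ∀ l, MeasurableSet (L l))
    (hγB2 : γB2 ∈ Set.Icc (0 : ℝ) 1) (hεB2 : εB2 ∈ Set.Icc (0 : ℝ) 1)
    (hposVL : ∀ l, 0 < μ (V ∩ L l))
    (hposVhL : ∀ l, 0 < μ (Vh ∩ L l))
    (hposCells : ∀ (l a b : Bool), (a, b) ≠ (false, false) →
      0 < μ (ev V a ∩ ev Vh b ∩ L l))
    (hmc : ∀ a b : Bool, (a, b) ≠ (false, false) →
      |condP μ Y (ev V a ∩ ev Vh b ∩ L true)
        - condP μ Y (ev V a ∩ ev Vh b ∩ L false) - g| ≤ εB2)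
    (hrecClose : |condP μ Vhᶜ (V ∩ L false) - condP μ Vhᶜ (V ∩ L true)| ≤ γB2)
    (hprecClose : |condP μ Vᶜ (Vh ∩ L false) - condP μ Vᶜ (Vh ∩ L true)| ≤ γB2) :
    |(condP μ Y (V ∩ L true) - condP μ Y (V ∩ L false))
      - (condP μ Y (Vh ∩ L true) - condP μ Y (Vh ∩ L false))|
      ≤ 2 * γB2 + 3 * εB2 := by
  have hr := gap_bound _ _ _ _ _ _ g εB2 γB2 (condP_nonneg' μ Vhᶜ (V ∩ L true))
    (condP_le_one' μ _ _) (condP_nonneg' μ _ _) (condP_le_one' μ _ _) (condP_nonneg' μ _ _)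
    (condP_le_one' μ _ _) (hmc true true (by simp)) (hmc true false (by simp)) hrecClose
  have hp := gap_bound _ _ _ _ _ _ g εB2 γB2 (condP_nonneg' μ Vᶜ (Vh ∩ L true))
    (condP_le_one' μ _ _) (condP_nonneg' μ _ _) (condP_le_one' μ _ _) (condP_nonneg' μ _ _)
    (condP_le_one' μ _ _) (hmc true true (by simp)) (hmc false true (by simp)) hprecClose
  have c1 := fun l => hposCells l true true (by simp)
  have c2 := fun l => hposCells l true false (by simp)
  have c3 := fun l => hposCells l false true (by simp)
  simp only [ev, cond_true, cond_false] at hr hp c1 c2 c3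
  rw [← condP_split μ Y V Vh _ hVh (c1 _) (c2 _), ← condP_split μ Y V Vh _ hVh (c1 _) (c2 _)] at hr
  simp only [Set.inter_comm V Vh, Set.inter_comm Vᶜ Vh] at hp c1 c3
  rw [← condP_split μ Y Vh V _ hV (c1 _) (c3 _), ← condP_split μ Y Vh V _ hV (c1 _) (c3 _)] at hp
  have := hεB2.1
  rw [abs_le] at *
  constructor <;> linarith
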